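/- Let F and K be linearly disjoint number fields over ℚ of degrees m and n, and let p be a rational prime unramified in F (or in K). Then v_p(Disc(FK)) = n·v_p(Disc(F)) + m·v_p(Disc(K)); equivalently the integer Δ_p(F,K) := Disc_p(F)^n · Disc_p(K)^m / Disc_p(FK) equals 1. -/

import Mathlib

/-!
In a compositum `E = FK` of linearly disjoint number fields, the different of `E/K` divides the
extension to `𝓞 E` of the different of `F/ℚ`, so its norm divides a power of `discr F`. If `p` is
unramified in `F`, only the second factor of the tower formula
`|discr E| = N(𝔇(E/K)) * |discr K| ^ [E : K]` can therefore contribute to the valuation at `p`, and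
`[E : K] = [F : ℚ]`.
-/

open IntermediateField Module NumberField

section Restrict

variable {k L : Type*} [Field k] [Field L] [Algebra k L] {A B C : IntermediateField k L}

theorem restrict_sup_restrict_eq_top :
    restrict (le_sup_left : A ≤ A ⊔ B) ⊔ restrict (le_sup_right : B ≤ A ⊔ B) = ⊤ := by
  rw [← lift_inj, lift_sup, lift_top, lift_restrict, lift_restrict]

theorem linearDisjoint_of_map {M : Type*} [Field M] [Algebra k M] (f : L →ₐ[k] M)
    (h : (A.map f).LinearDisjoint (B.map f)) : A.LinearDisjoint B := by
  let a := Basis.ofVectorSpace k A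
  let b := Basis.ofVectorSpace k B
  have hab := h.linearIndependent_mul
    (a.map (A.equivMap f).toLinearEquiv).linearIndependent
    (b.map (B.equivMap f).toLinearEquiv).linearIndependent
  refine .of_basis_mul a b (.of_comp f.toLinearMap ?_)
  simpa [Function.comp_def] using hab

theorem linearDisjoint_restrict (h : A.LinearDisjoint B) (hA : A ≤ C) (hB : B ≤ C) :
    (restrict hA).LinearDisjoint (restrict hB) := by
  refine linearDisjoint_of_map C.val ?_
  change (lift (restrict hA)).LinearDisjoint (lift (restrict hB))
  rwa [lift_restrict, lift_restrict]

end Restrict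

theorem padicValInt_discr_eq_add (K E : Type*) [Field K] [NumberField K] [Field E] [NumberField E]
    [Algebra K E] (p : ℕ) [Fact p.Prime] :
    padicValInt p (discr E) =
      padicValNat p (differentIdeal (𝓞 K) (𝓞 E)).absNorm +
        finrank K E * padicValInt p (discr K) := by
  have tower := natAbs_discr_eq_absNorm_differentIdeal_mul_natAbs_discr_pow K (𝓞 K) E (𝓞 E)
  have h_prod : (differentIdeal (𝓞 K) (𝓞 E)).absNorm * (discr K).natAbs ^ finrank K E ≠ 0 :=
    tower ▸ Int.natAbs_ne_zero.mpr (discr_ne_zero E)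
  rw [padicValInt, tower, padicValNat.mul (left_ne_zero_of_mul h_prod)
    (right_ne_zero_of_mul h_prod), padicValNat.pow, padicValInt]

section Compositum

variable {E : Type*} [Field E] [NumberField E] {F K : IntermediateField ℚ E}

theorem absNorm_differentIdeal_dvd_natAbs_discr_pow (h : F.LinearDisjoint K) (htop : F ⊔ K = ⊤) :
    (differentIdeal (𝓞 K) (𝓞 E)).absNorm ∣ (discr F).natAbs ^ finrank F E := by
  have h_dvd : differentIdeal (𝓞 K) (𝓞 E) ∣
      (differentIdeal ℤ (𝓞 F)).map (algebraMap (𝓞 F) (𝓞 E)) :=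
    IsDedekindDomain.differentIdeal_dvd_map_differentIdeal ℤ (𝓞 E) (𝓞 K) (𝓞 F) h.symm
      (sup_comm F K ▸ htop)
  let _ : Algebra (FractionRing (𝓞 F)) (FractionRing (𝓞 E)) := FractionRing.liftAlgebra _ _
  have h_norm := map_dvd Ideal.absNorm h_dvd
  rwa [Ideal.absNorm_algebraMap, absNorm_differentIdeal F,
    ← IsFractionRing.finrank_eq (𝓞 F) F (𝓞 E) E] at h_norm

theorem padicValInt_discr_of_not_dvd_discr_left (h : F.LinearDisjoint K) (htop : F ⊔ K = ⊤) {p : ℕ}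
    (hp : p.Prime) (hF : ¬ (p : ℤ) ∣ discr F) :
    padicValInt p (discr E) = finrank ℚ F * padicValInt p (discr K) := by
  have := Fact.mk hp
  have h_norm : ¬ p ∣ (differentIdeal (𝓞 K) (𝓞 E)).absNorm := fun hdvd ↦
    hF <| Int.natCast_dvd.mpr <| hp.dvd_of_dvd_pow <|
      hdvd.trans (absNorm_differentIdeal_dvd_natAbs_discr_pow h htop)
  rw [padicValInt_discr_eq_add K E, padicValNat.eq_zero_of_not_dvd h_norm, zero_add,
    h.finrank_right_eq_finrank htop]

theorem padicValInt_discr_of_sup_eq_top (h : F.LinearDisjoint K) (htop : F ⊔ K = ⊤) {p : ℕ}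
    (hp : p.Prime) (hunram : ¬ (p : ℤ) ∣ discr F ∨ ¬ (p : ℤ) ∣ discr K) :
    padicValInt p (discr E) =
      finrank ℚ K * padicValInt p (discr F) + finrank ℚ F * padicValInt p (discr K) := by
  rcases hunram with hF | hK
  · rw [padicValInt_discr_of_not_dvd_discr_left h htop hp hF, padicValInt.eq_zero_of_not_dvd hF,
      mul_zero, zero_add]
  · rw [padicValInt_discr_of_not_dvd_discr_left h.symm (sup_comm F K ▸ htop) hp hK,
      padicValInt.eq_zero_of_not_dvd hK, mul_zero, add_zero]

end Compositum

theorem stmt_17_general {L : Type*} [Field L] [CharZero L] (F K : IntermediateField ℚ L)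
    [NumberField F] [NumberField K] [NumberField ↥(F ⊔ K)] (hdisj : F.LinearDisjoint K) {p : ℕ}
    (hp : p.Prime) (hunram : ¬ (p : ℤ) ∣ discr F ∨ ¬ (p : ℤ) ∣ discr K) :
    padicValInt p (discr ↥(F ⊔ K)) =
      finrank ℚ K * padicValInt p (discr F) + finrank ℚ F * padicValInt p (discr K) := by
  let eF := restrictAlgEquiv (le_sup_left : F ≤ F ⊔ K)
  let eK := restrictAlgEquiv (le_sup_right : K ≤ F ⊔ K)
  rw [discr_eq_discr_of_algEquiv F eF, discr_eq_discr_of_algEquiv K eK] at hunram ⊢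
  rw [eF.toLinearEquiv.finrank_eq, eK.toLinearEquiv.finrank_eq]
  exact padicValInt_discr_of_sup_eq_top (linearDisjoint_restrict hdisj le_sup_left le_sup_right)
    restrict_sup_restrict_eq_top hp hunram

/-- Let `F` and `K` be linearly disjoint number fields over `ℚ` of degrees `m` and `n`
(inside a common number field `L`, with `[FK : ℚ] = mn`), and let `p` be a rational prime
unramified in `F` (i.e. `p ∤ Disc(F)`). Then
`v_p(Disc(FK)) = n·v_p(Disc(F)) + m·v_p(Disc(K))`. -/
theorem stmt_17 {L : Type*} [Field L] [NumberField L]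
    (F K : IntermediateField ℚ L)
    [NumberField F] [NumberField K] [NumberField ↥(F ⊔ K)]
    (m n : ℕ) (hm : Module.finrank ℚ F = m) (hn : Module.finrank ℚ K = n)
    (hmn : Module.finrank ℚ ↥(F ⊔ K) = m * n)
    (hdisj : F.LinearDisjoint K)
    (p : ℕ) (hp : p.Prime) (hunram : ¬ (p : ℤ) ∣ NumberField.discr F) :
    padicValInt p (NumberField.discr ↥(F ⊔ K)) =
      n * padicValInt p (NumberField.discr F) + m * padicValInt p (NumberField.discr K) := by
  subst hm hn
  exact stmt_17_general F K hdisj hp (.inl hunram)
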